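/- arXiv:2505.16295 — 2 statements merged into one kernel-verified Lean document; each statement's English description precedes it below -/
import Mathlib

section
/- (Main theorem, odd unitary analogue of the Gram–Schmidt process.) The subgroup of GL_N(R) generated by the set {θ(v) : v ∈ R^N} ∪ {η(v) : v ∈ R^N} coincides with the elementary linear group E_N(R). -/
open Matrix

/-- `Emat N i j a` is the elementary matrix `E_{i,j}(a) = I_N + a·e_{ij}`,
where `i, j` are 1-based indices and `e_{ij}` is the matrix unit. -/
def Emat (R : Type*) [Ring R] (N i j : ℕ) (a : R) : Matrix (Fin N) (Fin N) R :=
  1 + Matrix.of (fun r c : Fin N => if r.val + 1 = i ∧ c.val + 1 = j then a else 0)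

/-- The elementary linear group `E_N(R)`: the subgroup of `GL_N(R)` generated by all
elementary matrices `E_{i,j}(a)` with `1 ≤ i ≠ j ≤ N`, `a ∈ R`. -/
def elemGroup (N : ℕ) (R : Type*) [Ring R] : Subgroup (Matrix (Fin N) (Fin N) R)ˣ :=
  Subgroup.closure { M : (Matrix (Fin N) (Fin N) R)ˣ |
    ∃ (i j : ℕ) (a : R), 1 ≤ i ∧ i ≤ N ∧ 1 ≤ j ∧ j ≤ N ∧ i ≠ j ∧
      M.val = Emat R N i j a }

/-- 1-based access to the entries of a vector `v ∈ R^N` (0 outside the range). -/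
def vecEntry {R : Type*} [Ring R] {N : ℕ} (v : Fin N → R) (i : ℕ) : R :=
  if h : 1 ≤ i ∧ i ≤ N then v ⟨i - 1, by omega⟩ else 0

/-- 1-based access to the entries of an `n × n` matrix (0 outside the range). -/
def matEntry {R : Type*} [Ring R] {n : ℕ} (φ : Matrix (Fin n) (Fin n) R) (i j : ℕ) : R :=
  if h : 1 ≤ i ∧ i ≤ n ∧ 1 ≤ j ∧ j ≤ n then φ ⟨i - 1, by omega⟩ ⟨j - 1, by omega⟩ else 0

/-- The matrix `θ(v)` of size `N = n + 2m - 1`: it agrees with the identity matrix except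
in the first row, where (in 1-based indices, with `c` the column index)
`θ(v)_{1,2k} = σ(a_{2k+1})` and `θ(v)_{1,2k+1} = -σ(1)⁻¹·σ(a_{2k})` for `1 ≤ k ≤ m-1`, and
`θ(v)_{1,2m-1+k} = -σ(1)⁻¹·(Σ_{j=1}^{n} σ(a_{2m-1+j})·φ_{jk})` for `1 ≤ k ≤ n`. -/
noncomputable def theta {R : Type*} [Ring R] (σ : R → R) (m n : ℕ)
    (φ : Matrix (Fin n) (Fin n) R) (v : Fin (n + 2*m - 1) → R) :
    Matrix (Fin (n + 2*m - 1)) (Fin (n + 2*m - 1)) R :=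
  Matrix.of fun i j =>
    if i.val = 0 then
      (if j.val + 1 = 1 then 1
       else if j.val + 1 ≤ 2*m - 1 then
         (if (j.val + 1) % 2 = 0 then σ (vecEntry v (j.val + 2))
          else -(Ring.inverse (σ 1)) * σ (vecEntry v j.val))
       else -(Ring.inverse (σ 1)) *
         ∑ l ∈ Finset.Icc 1 n,
           σ (vecEntry v (2*m - 1 + l)) * matEntry φ l (j.val + 1 - (2*m - 1)))
    else if i = j then 1 else 0

/-- The matrix `η(v)` of size `N = n + 2m - 1`: it agrees with the identity matrix except
in the first column, where (in 1-based indices, with `r` the row index)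
`η(v)_{2k,1} = σ(1)⁻²·σ(a_{2k+1})` and `η(v)_{2k+1,1} = -σ(1)⁻¹·σ(a_{2k})` for `1 ≤ k ≤ m-1`,
and `η(v)_{2m-1+k,1} = -σ(1)⁻¹·(Σ_{j=1}^{n} σ(a_{2m-1+j})·ψ_{kj})` for `1 ≤ k ≤ n`,
where `ψ` is (meant to be) `φ⁻¹`. -/
noncomputable def eta {R : Type*} [Ring R] (σ : R → R) (m n : ℕ)
    (ψ : Matrix (Fin n) (Fin n) R) (v : Fin (n + 2*m - 1) → R) :
    Matrix (Fin (n + 2*m - 1)) (Fin (n + 2*m - 1)) R :=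
  Matrix.of fun i j =>
    if j.val = 0 then
      (if i.val + 1 = 1 then 1
       else if i.val + 1 ≤ 2*m - 1 then
         (if (i.val + 1) % 2 = 0 then (Ring.inverse (σ 1))^2 * σ (vecEntry v (i.val + 2))
          else -(Ring.inverse (σ 1)) * σ (vecEntry v i.val))
       else -(Ring.inverse (σ 1)) *
         ∑ l ∈ Finset.Icc 1 n,
           σ (vecEntry v (2*m - 1 + l)) * matEntry ψ (i.val + 1 - (2*m - 1)) l)
    else if i = j then 1 else 0

/-!
Every `θ(v)` and `η(v)` is a transvection `1 + b * f`, with `b` a column and `f` a row, where one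
of the two is the unit vector `e` at the first position and the other vanishes there. As `v`
varies, `θ(v)` yields every row `f`, because `φ` is invertible. The columns of `η(v)` are only the
left linear combinations of the columns of `diag(1, ψ)`, and over a noncommutative ring these need
not exhaust all columns. However, the columns of `diag(1, ψ)` form a basis with right coefficients,
dual to the rows of `diag(1, φ)`. If `g · b = f · c = f · b = 0`, the commutator of `1 + b * g` and
`1 + c * f` is `1 + b * (g · c) f`, so commutators supply the missing right multiples. When there
is only one position besides the first, no such commutators are available, but then `ψᵀ = ψ` and
left combinations suffice. All first rows and all first columns generate the elementary group.
-/

section Units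

variable {M : Type*} [Ring M] {G : Subgroup Mˣ} {X Y : M}

theorem one_sub_mem_ofUnits (hX : X * X = 0) (h : 1 + X ∈ G.ofUnits) : 1 - X ∈ G.ofUnits := by
  obtain ⟨g, hg, hgX⟩ := h
  refine G.mem_ofUnits (G.inv_mem hg) (Units.inv_eq_of_mul_eq_one_right ?_)
  rw [show (g : M) = 1 + X from hgX]
  linear_combination (norm := noncomm_ring) -hX

theorem one_add_mul_mem_ofUnits (hX : X * X = 0) (hY : Y * Y = 0) (hYX : Y * X = 0)
    (hXG : 1 + X ∈ G.ofUnits) (hYG : 1 + Y ∈ G.ofUnits) : 1 + X * Y ∈ G.ofUnits := by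
  have hcomm : (1 + X) * (1 + Y) * (1 - X) * (1 - Y) = 1 + X * Y := by
    have hXYX : X * Y * X = 0 := by rw [mul_assoc, hYX, mul_zero]
    have hXYY : X * Y * Y = 0 := by rw [mul_assoc, hY, mul_zero]
    simp only [mul_add, add_mul, mul_sub, sub_mul, mul_one, one_mul, hX, hY, hYX, hXYX, hXYY,
      add_zero]
    abel
  rw [← hcomm]
  exact mul_mem (mul_mem (mul_mem hXG hYG) (one_sub_mem_ofUnits hX hXG))
    (one_sub_mem_ofUnits hY hYG)

end Units

section RankOne

variable {R ι κ : Type*} [Ring R] [DecidableEq ι]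

theorem vecMulVec_single_single (i j : ι) (a b : R) :
    vecMulVec (Pi.single i a) (Pi.single j b) = Matrix.single i j (a * b) := by
  ext r c
  simp only [vecMulVec_apply, Matrix.single_apply, Pi.single_apply]
  grind

variable [Fintype ι] [Fintype κ]

theorem one_add_vecMulVec_sum_mem {S : Submonoid (Matrix ι ι R)} {b : ι → R} {f : κ → ι → R}
    (hfb : ∀ k, f k ⬝ᵥ b = 0) (hf : ∀ k, 1 + vecMulVec b (f k) ∈ S) :
    1 + vecMulVec b (∑ k, f k) ∈ S := by
  suffices (∑ k, f k) ⬝ᵥ b = 0 ∧ 1 + vecMulVec b (∑ k, f k) ∈ S from this.2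
  refine Finset.sum_induction f (fun g ↦ g ⬝ᵥ b = 0 ∧ 1 + vecMulVec b g ∈ S) ?_ (by simp)
    fun k _ ↦ ⟨hfb k, hf k⟩
  rintro g h ⟨hgb, hg⟩ ⟨hhb, hh⟩
  refine ⟨by rw [add_dotProduct, hgb, hhb, add_zero], ?_⟩
  convert mul_mem hg hh using 1
  simp only [add_mul, mul_add, one_mul, mul_one, vecMulVec_mul_vecMulVec, hgb, zero_smul,
    vecMulVec_zero, vecMulVec_add, add_zero]
  abel

theorem one_add_sum_vecMulVec_mem {S : Submonoid (Matrix ι ι R)} {b : κ → ι → R} {f : ι → R}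
    (hfb : ∀ k, f ⬝ᵥ b k = 0) (hb : ∀ k, 1 + vecMulVec (b k) f ∈ S) :
    1 + vecMulVec (∑ k, b k) f ∈ S := by
  suffices f ⬝ᵥ (∑ k, b k) = 0 ∧ 1 + vecMulVec (∑ k, b k) f ∈ S from this.2
  refine Finset.sum_induction b (fun c ↦ f ⬝ᵥ c = 0 ∧ 1 + vecMulVec c f ∈ S) ?_ (by simp)
    fun k _ ↦ ⟨hfb k, hb k⟩
  rintro c d ⟨hfc, hc⟩ ⟨hfd, hd⟩
  refine ⟨by rw [dotProduct_add, hfc, hfd, add_zero], ?_⟩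
  convert mul_mem hc hd using 1
  simp only [add_mul, mul_add, one_mul, mul_one, vecMulVec_mul_vecMulVec, hfd, zero_smul,
    vecMulVec_zero, add_vecMulVec, add_zero]
  abel

theorem one_add_vecMulVec_single_left_mem {S : Submonoid (Matrix ι ι R)} {z : ι}
    (hS : ∀ j ≠ z, ∀ a, 1 + Matrix.single z j a ∈ S) {f : ι → R} (hf : f z = 0) :
    1 + vecMulVec (Pi.single z 1) f ∈ S := by
  rw [← Finset.univ_sum_single f]
  refine one_add_vecMulVec_sum_mem (fun j ↦ ?_) fun j ↦ ?_ <;> obtain rfl | hj := eq_or_ne j z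
  · simp [hf]
  · simp [hj]
  · simp [hf]
  · simpa only [vecMulVec_single_single, one_mul] using hS j hj (f j)

theorem one_add_vecMulVec_single_right_mem {S : Submonoid (Matrix ι ι R)} {z : ι}
    (hS : ∀ i ≠ z, ∀ a, 1 + Matrix.single i z a ∈ S) {b : ι → R} (hb : b z = 0) :
    1 + vecMulVec b (Pi.single z 1) ∈ S := by
  rw [← Finset.univ_sum_single b]
  refine one_add_sum_vecMulVec_mem (fun i ↦ ?_) fun i ↦ ?_ <;> obtain rfl | hi := eq_or_ne i z
  · simp [hb]
  · simp [hi.symm]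
  · simp [hb]
  · simpa only [vecMulVec_single_single, mul_one] using hS i hi (b i)

variable {G : Subgroup (Matrix ι ι R)ˣ}

theorem one_add_vecMulVec_smul_mem_ofUnits {b c f g : ι → R} (hgb : g ⬝ᵥ b = 0)
    (hfc : f ⬝ᵥ c = 0) (hfb : f ⬝ᵥ b = 0) (hG : 1 + vecMulVec b g ∈ G.ofUnits)
    (hG' : 1 + vecMulVec c f ∈ G.ofUnits) :
    1 + vecMulVec b ((g ⬝ᵥ c) • f) ∈ G.ofUnits := by
  rw [← vecMulVec_mul_vecMulVec]
  apply one_add_mul_mem_ofUnits _ _ _ hG hG' <;> simp [vecMulVec_mul_vecMulVec, *]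

theorem one_add_single_mem_ofUnits {z : ι}
    (hrow : ∀ f : ι → R, f z = 0 → 1 + vecMulVec (Pi.single z 1) f ∈ G.ofUnits)
    (hcol : ∀ b : ι → R, b z = 0 → 1 + vecMulVec b (Pi.single z 1) ∈ G.ofUnits)
    {i j : ι} (hij : i ≠ j) (a : R) : 1 + Matrix.single i j a ∈ G.ofUnits := by
  obtain rfl | hi := eq_or_ne i z
  · simpa [vecMulVec_single_single] using hrow (Pi.single j a) (by simp [hij])
  obtain rfl | hj := eq_or_ne j z
  · simpa [vecMulVec_single_single] using hcol (Pi.single i a) (by simp [hij.symm])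
  have h := one_add_vecMulVec_smul_mem_ofUnits (by simp [hi.symm]) (by simp [hj]) (by simp [hij])
    (hcol (Pi.single i 1) (by simp [hi.symm])) (hrow (Pi.single j a) (by simp [hj.symm]))
  simpa [vecMulVec_single_single] using h

theorem apply_eq_zero_of_mul_eq_one_sub_single_left [DecidableEq κ] {z : ι} {P : Matrix ι κ R}
    {Q : Matrix κ ι R} (hQP : Q * P = 1) (hPQ : P * Q = 1 - Matrix.single z z 1) (k : κ) :
    P z k = 0 := by
  have h : Matrix.single z z (1 : R) * P = 0 := by
    rw [← sub_sub_cancel 1 (Matrix.single z z (1 : R)), ← hPQ, Matrix.sub_mul, Matrix.mul_assoc,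
      hQP, Matrix.one_mul, Matrix.mul_one, sub_self]
  simpa using congr_fun₂ h z k

theorem apply_eq_zero_of_mul_eq_one_sub_single_right [DecidableEq κ] {z : ι} {P : Matrix ι κ R}
    {Q : Matrix κ ι R} (hQP : Q * P = 1) (hPQ : P * Q = 1 - Matrix.single z z 1) (k : κ) :
    Q k z = 0 := by
  have h : Q * Matrix.single z z (1 : R) = 0 := by
    rw [← sub_sub_cancel 1 (Matrix.single z z (1 : R)), ← hPQ, Matrix.mul_sub, ← Matrix.mul_assoc,
      hQP, Matrix.one_mul, Matrix.mul_one, sub_self]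
  simpa using congr_fun₂ h k z

-- Write `p k`, `q l` for the dual bases and `e` for the unit vector at `z`. Commutators turn
-- `1 + p k * e` and `1 + e * a q l` into `1 + p k * a q l` for `k ≠ l`, and the latter together
-- with `1 + p l * e` into `1 + p k * a e`.
theorem one_add_vecMulVec_mem_ofUnits_of_dual_bases [Nontrivial κ] [DecidableEq κ] {z : ι}
    {P : Matrix ι κ R} {Q : Matrix κ ι R} (hQP : Q * P = 1) (hPQ : P * Q = 1 - Matrix.single z z 1)
    (hrow : ∀ f : ι → R, f z = 0 → 1 + vecMulVec (Pi.single z 1) f ∈ G.ofUnits)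
    (hcol : ∀ k, 1 + vecMulVec (P.col k) (Pi.single z 1) ∈ G.ofUnits)
    {b : ι → R} (hb : b z = 0) : 1 + vecMulVec b (Pi.single z 1) ∈ G.ofUnits := by
  have hPz := apply_eq_zero_of_mul_eq_one_sub_single_left hQP hPQ
  have hQz := apply_eq_zero_of_mul_eq_one_sub_single_right hQP hPQ
  have hdual (k l) : Q.row k ⬝ᵥ P.col l = if k = l then 1 else 0 := by
    rw [← Matrix.one_apply, ← hQP, Matrix.mul_apply']
    rfl
  have hoff {k l} (hkl : k ≠ l) (a : R) :
      1 + vecMulVec (P.col k) (a • Q.row l) ∈ G.ofUnits := by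
    have h := one_add_vecMulVec_smul_mem_ofUnits (f := a • Q.row l) (by simp [hPz])
      (by simp [hQz]) (by simp [hdual, hkl.symm]) (hcol k) (hrow _ (by simp [hQz]))
    simpa using h
  have hscale (k) (a : R) : 1 + vecMulVec (P.col k) (a • Pi.single z 1) ∈ G.ofUnits := by
    obtain ⟨l, hl⟩ := exists_ne k
    have h := one_add_vecMulVec_smul_mem_ofUnits (by simp [hdual, hl]) (by simp [hPz])
      (by simp [hPz]) (hoff hl.symm a) (hcol l)
    simpa [hdual] using h
  have hbP : P *ᵥ (Q *ᵥ b) = b := by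
    rw [mulVec_mulVec, hPQ, sub_mulVec, one_mulVec, single_mulVec, hb]
    simp
  rw [← hbP, mulVec_eq_sum]
  refine one_add_sum_vecMulVec_mem (fun k ↦ by simp [hPz]) fun k ↦ ?_
  rw [← vecMulVec_smul']
  exact hscale k _

end RankOne

section ElementaryGroup

variable {R : Type*} [Ring R] {N : ℕ}

theorem Emat_val_add_one (i j : Fin N) (a : R) :
    Emat R N (i + 1) (j + 1) a = 1 + Matrix.single i j a := by
  ext r c
  simp [Emat, Matrix.single_apply, Fin.ext_iff, eq_comm]

theorem elemGroup_le_iff {G : Subgroup (Matrix (Fin N) (Fin N) R)ˣ} :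
    elemGroup N R ≤ G ↔ ∀ i j : Fin N, i ≠ j → ∀ a : R, 1 + Matrix.single i j a ∈ G.ofUnits := by
  rw [elemGroup, Subgroup.closure_le]
  constructor
  · intro h i j hij a
    have hunit : IsUnit (1 + Matrix.single i j a) := by
      refine IsNilpotent.isUnit_one_add ⟨2, ?_⟩
      rw [pow_two, Matrix.single_mul_single_of_ne _ _ _ _ hij.symm]
    refine G.mem_ofUnits (h ⟨i + 1, j + 1, a, ?_⟩) hunit.unit_spec
    refine ⟨by omega, by omega, by omega, by omega, by simpa [Fin.ext_iff] using hij, ?_⟩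
    rw [hunit.unit_spec, Emat_val_add_one]
  · rintro h M ⟨i, j, a, hi, hiN, hj, hjN, hij, hM⟩
    obtain ⟨i, rfl⟩ := Nat.exists_eq_add_of_le' hi
    obtain ⟨j, rfl⟩ := Nat.exists_eq_add_of_le' hj
    apply G.mem_of_mem_val_ofUnits
    rw [hM, Emat_val_add_one ⟨i, hiN⟩ ⟨j, hjN⟩]
    exact h _ _ (by simpa [Fin.ext_iff] using hij) a

end ElementaryGroup

section Blocks

variable {R : Type*} [Ring R] {m n : ℕ}

/-- Positions after the first one: `m - 1` hyperbolic pairs followed by the `n` positions on which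
the form `φ` lives. -/
abbrev TailIndex (m n : ℕ) : Type := (Fin (m - 1) × Fin 2) ⊕ Fin n

/-- The splitting of the positions `0, …, n + 2m - 2` into the first one, the pairs
`(2k + 1, 2k + 2)` and the final block of length `n`. -/
def blockEquiv (hm : 1 ≤ m) : Fin 1 ⊕ TailIndex m n ≃ Fin (n + 2 * m - 1) :=
  (Equiv.sumCongr (Equiv.refl _)
    ((Equiv.sumCongr finProdFinEquiv (Equiv.refl _)).trans finSumFinEquiv)).trans
    (finSumFinEquiv.trans (finCongr (by omega)))

theorem blockEquiv_inl_val (hm : 1 ≤ m) (i : Fin 1) :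
    (blockEquiv hm (.inl i : Fin 1 ⊕ TailIndex m n) : ℕ) = 0 := by
  simp [blockEquiv]

theorem blockEquiv_pair_val (hm : 1 ≤ m) (k : Fin (m - 1)) (i : Fin 2) :
    (blockEquiv hm (.inr (.inl (k, i)) : Fin 1 ⊕ TailIndex m n) : ℕ) = 2 * k + i + 1 := by
  simp only [blockEquiv, Equiv.trans_apply, Equiv.sumCongr_apply, Equiv.coe_trans, Sum.map_inr,
    Function.comp_apply, Sum.map_inl, finSumFinEquiv_apply_left, finSumFinEquiv_apply_right,
    finCongr_apply, Fin.val_cast, Fin.val_natAdd, Fin.val_castAdd, finProdFinEquiv_apply_val]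
  omega

theorem blockEquiv_last_val (hm : 1 ≤ m) (l : Fin n) :
    (blockEquiv hm (.inr (.inr l) : Fin 1 ⊕ TailIndex m n) : ℕ) = 2 * m - 1 + l := by
  simp only [blockEquiv, Equiv.trans_apply, Equiv.sumCongr_apply, Equiv.coe_refl, Equiv.coe_trans,
    Sum.map_inr, Function.comp_apply, id_eq, finSumFinEquiv_apply_right, finCongr_apply,
    Fin.val_cast, Fin.val_natAdd]
  omega

/-- The matrix `(0 | diag(1, φ))`, whose rows, for invertible `φ`, form a basis of the row vectors
vanishing at the first position. The dual basis of columns is given by `(tailFrame hm ψᵀ)ᵀ` with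
`ψ = φ⁻¹`. -/
def tailFrame (hm : 1 ≤ m) (φ : Matrix (Fin n) (Fin n) R) :
    Matrix (TailIndex m n) (Fin (n + 2 * m - 1)) R :=
  (fromCols 0 (fromBlocks 1 0 0 φ)).submatrix id (blockEquiv hm).symm

theorem tailFrame_mul_transpose (hm : 1 ≤ m) {φ ψ : Matrix (Fin n) (Fin n) R}
    (h : φ * ψ = 1) : tailFrame hm φ * (tailFrame hm ψᵀ)ᵀ = 1 := by
  rw [tailFrame, tailFrame, transpose_submatrix, submatrix_mul_equiv]
  simp [transpose_fromCols, fromCols_mul_fromRows, fromBlocks_transpose, fromBlocks_multiply, h]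

theorem transpose_mul_tailFrame (hm : 1 ≤ m) {φ ψ : Matrix (Fin n) (Fin n) R}
    (h : ψ * φ = 1) :
    (tailFrame hm ψᵀ)ᵀ * tailFrame hm φ =
      1 - Matrix.single (blockEquiv hm (.inl 0)) (blockEquiv hm (.inl 0)) 1 := by
  rw [tailFrame, tailFrame, transpose_submatrix, ← Equiv.coe_refl, submatrix_mul_equiv,
    transpose_fromCols, fromRows_mul_fromCols, fromBlocks_transpose, fromBlocks_multiply]
  ext i j
  obtain ⟨i | i, rfl⟩ := (blockEquiv hm).surjective i <;>
    obtain ⟨j | j, rfl⟩ := (blockEquiv hm).surjective j <;>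
    simp [h, Matrix.one_apply, Subsingleton.elim _ (0 : Fin 1)]

theorem vecMul_tailFrame_head (hm : 1 ≤ m) (φ : Matrix (Fin n) (Fin n) R)
    (c : TailIndex m n → R) : (c ᵥ* tailFrame hm φ) (blockEquiv hm (.inl 0)) = 0 := by
  simp [vecMul, dotProduct, tailFrame]

theorem vecMul_tailFrame_pair (hm : 1 ≤ m) (φ : Matrix (Fin n) (Fin n) R)
    (c : TailIndex m n → R) (p : Fin (m - 1) × Fin 2) :
    (c ᵥ* tailFrame hm φ) (blockEquiv hm (.inr (.inl p))) = c (.inl p) := by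
  simp [vecMul, dotProduct, tailFrame, Matrix.one_apply]

theorem vecMul_tailFrame_last (hm : 1 ≤ m) (φ : Matrix (Fin n) (Fin n) R)
    (c : TailIndex m n → R) (l : Fin n) :
    (c ᵥ* tailFrame hm φ) (blockEquiv hm (.inr (.inr l))) = ∑ j, c (.inr j) * φ j l := by
  simp [vecMul, dotProduct, tailFrame]

/-- The coordinates, in the frame `tailFrame`, of the first row of `θ(v)` (with `u = 1`) or of the
first column of `η(v)` (with `u = σ(1)⁻²`), except for the diagonal entry. -/
noncomputable def coord (σ : R → R) (hm : 1 ≤ m) (u : R) (v : Fin (n + 2 * m - 1) → R) :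
    TailIndex m n → R
  | .inl (k, 0) => u * σ (v (blockEquiv hm (.inr (.inl (k, 1)))))
  | .inl (k, 1) => -Ring.inverse (σ 1) * σ (v (blockEquiv hm (.inr (.inl (k, 0)))))
  | .inr l => -Ring.inverse (σ 1) * σ (v (blockEquiv hm (.inr (.inr l))))

theorem coord_surjective {σ : R → R} (hσ : Function.Surjective σ) (hσone : IsUnit (σ 1))
    (hm : 1 ≤ m) {u : R} (hu : IsUnit u) :
    Function.Surjective (coord (n := n) σ hm u) := by
  intro c
  have hscale {w : R} (hw : IsUnit w) (r : R) : ∃ a, w * σ a = r := by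
    obtain ⟨a, ha⟩ := hσ (hw.unit⁻¹ * r)
    exact ⟨a, by rw [ha, ← mul_assoc, hw.mul_val_inv, one_mul]⟩
  have hinv : IsUnit (-Ring.inverse (σ 1)) := hσone.ringInverse.neg
  choose f hf using fun r ↦ hscale hu r
  choose g hg using fun r ↦ hscale hinv r
  let w : Fin 1 ⊕ TailIndex m n → R
    | .inl _ => 0
    | .inr (.inl (k, 0)) => g (c (.inl (k, 1)))
    | .inr (.inl (k, 1)) => f (c (.inl (k, 0)))
    | .inr (.inr l) => g (c (.inr l))
  refine ⟨w ∘ (blockEquiv hm).symm, ?_⟩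
  ext (⟨k, i⟩ | l)
  · fin_cases i <;> simp [coord, w, hf, hg, -neg_mul]
  · simp [coord, w, hg, -neg_mul]

end Blocks

section ThetaEta

variable {R : Type*} [Ring R] {m n N : ℕ}

theorem vecEntry_eq_of_eq_val_add_one (v : Fin N → R) {i : Fin N} {j : ℕ} (h : j = i + 1) :
    vecEntry v j = v i := by
  simp [vecEntry, h]

theorem matEntry_val_add_one (φ : Matrix (Fin n) (Fin n) R) (i j : Fin n) :
    matEntry φ (i + 1) (j + 1) = φ i j := by
  simp [matEntry]

theorem sum_Icc_vecEntry (σ : R → R) (hm : 1 ≤ m) (v : Fin (n + 2 * m - 1) → R) (g : ℕ → R) :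
    ∑ l ∈ Finset.Icc 1 n, σ (vecEntry v (2 * m - 1 + l)) * g l =
      ∑ l : Fin n, σ (v (blockEquiv hm (.inr (.inr l)))) * g (l + 1) := by
  have hvec (l : Fin n) :
      vecEntry v (2 * m - 1 + (l + 1)) = v (blockEquiv hm (.inr (.inr l))) :=
    vecEntry_eq_of_eq_val_add_one v (by rw [blockEquiv_last_val]; omega)
  simp_rw [← hvec]
  rw [Fin.sum_univ_eq_sum_range (fun l ↦ σ (vecEntry v (2 * m - 1 + (l + 1))) * g (l + 1)),
    Finset.range_eq_Ico, Finset.sum_Ico_add' (fun l ↦ σ (vecEntry v (2 * m - 1 + l)) * g l),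
    zero_add, Finset.Ico_add_one_right_eq_Icc]

theorem matEntry_transpose (φ : Matrix (Fin n) (Fin n) R) (i j : ℕ) :
    matEntry φᵀ i j = matEntry φ j i := by
  simp only [matEntry, transpose_apply]
  grind

-- The formula shared by the first row of `θ(v)` and the first column of `η(v)`.
theorem ite_vecEntry_eq_coord_vecMul_tailFrame (σ : R → R) (hm : 1 ≤ m) (u : R)
    (φ : Matrix (Fin n) (Fin n) R) (v : Fin (n + 2 * m - 1) → R) (p : TailIndex m n)
    {c : ℕ} (hc : c = blockEquiv hm (.inr p)) :
    (if c + 1 ≤ 2 * m - 1 then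
        if (c + 1) % 2 = 0 then u * σ (vecEntry v (c + 2))
        else -Ring.inverse (σ 1) * σ (vecEntry v c)
      else -Ring.inverse (σ 1) *
        ∑ l ∈ Finset.Icc 1 n, σ (vecEntry v (2 * m - 1 + l)) * matEntry φ l (c + 1 - (2 * m - 1))) =
      (coord σ hm u v ᵥ* tailFrame hm φ) (blockEquiv hm (.inr p)) := by
  obtain ⟨k, i⟩ | l := p
  · have hk := k.isLt
    rw [vecMul_tailFrame_pair]
    rw [blockEquiv_pair_val] at hc
    rw [if_pos (by omega)]
    fin_cases i
    · have hc : c = 2 * k + 1 := hc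
      rw [if_pos (by omega), vecEntry_eq_of_eq_val_add_one v
        (i := blockEquiv hm (.inr (.inl (k, 1)))) (by rw [blockEquiv_pair_val, hc]; simp)]
      rfl
    · have hc : c = 2 * k + 2 := hc
      rw [if_neg (by omega), vecEntry_eq_of_eq_val_add_one v
        (i := blockEquiv hm (.inr (.inl (k, 0)))) (by rw [blockEquiv_pair_val, hc]; simp)]
      rfl
  · have hcol : c + 1 - (2 * m - 1) = l + 1 := by rw [hc, blockEquiv_last_val]; omega
    rw [vecMul_tailFrame_last, if_neg (by omega), hcol, sum_Icc_vecEntry σ hm, Finset.mul_sum]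
    simp only [coord, matEntry_val_add_one, mul_assoc]

theorem theta_eq_one_add_vecMulVec (σ : R → R) (hm : 1 ≤ m) (φ : Matrix (Fin n) (Fin n) R)
    (v : Fin (n + 2 * m - 1) → R) :
    theta σ m n φ v =
      1 + vecMulVec (Pi.single (blockEquiv hm (.inl 0)) 1) (coord σ hm 1 v ᵥ* tailFrame hm φ) := by
  ext i j
  by_cases hi : i = blockEquiv hm (.inl 0)
  · subst hi
    obtain ⟨j | p, rfl⟩ := (blockEquiv hm).surjective j
    · simp [theta, blockEquiv_inl_val, vecMulVec_apply, Subsingleton.elim j 0,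
        vecMul_tailFrame_head]
    · have hp : (blockEquiv hm (.inr p) : ℕ) ≠ 0 := by simp [blockEquiv]
      simp [theta, blockEquiv_inl_val, vecMulVec_apply, hp,
        ← ite_vecEntry_eq_coord_vecMul_tailFrame]
  · have hi' : (i : ℕ) ≠ 0 := by rwa [Ne, ← blockEquiv_inl_val hm 0, Fin.val_inj]
    simp [theta, vecMulVec_apply, hi, hi', Matrix.one_apply]

theorem eta_eq_one_add_vecMulVec (σ : R → R) (hm : 1 ≤ m) (ψ : Matrix (Fin n) (Fin n) R)
    (v : Fin (n + 2 * m - 1) → R) :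
    eta σ m n ψ v =
      1 + vecMulVec (coord σ hm (Ring.inverse (σ 1) ^ 2) v ᵥ* tailFrame hm ψᵀ)
        (Pi.single (blockEquiv hm (.inl 0)) 1) := by
  ext i j
  by_cases hj : j = blockEquiv hm (.inl 0)
  · subst hj
    obtain ⟨i | p, rfl⟩ := (blockEquiv hm).surjective i
    · simp [eta, blockEquiv_inl_val, vecMulVec_apply, Subsingleton.elim i 0, vecMul_tailFrame_head]
    · have hp : (blockEquiv hm (.inr p) : ℕ) ≠ 0 := by simp [blockEquiv]
      simp [eta, blockEquiv_inl_val, vecMulVec_apply, hp,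
        ← ite_vecEntry_eq_coord_vecMul_tailFrame, matEntry_transpose]
  · have hj' : (j : ℕ) ≠ 0 := by rwa [Ne, ← blockEquiv_inl_val hm 0, Fin.val_inj]
    simp [eta, vecMulVec_apply, hj, hj', Matrix.one_apply]

end ThetaEta

section Generation

variable {R : Type*} [Ring R] {m n : ℕ}

theorem exists_vecMul_tailFrame_eq (hm : 1 ≤ m) {φ ψ : Matrix (Fin n) (Fin n) R} (h : ψ * φ = 1)
    {f : Fin (n + 2 * m - 1) → R} (hf : f (blockEquiv hm (.inl 0)) = 0) :
    ∃ c, c ᵥ* tailFrame hm φ = f := by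
  refine ⟨f ᵥ* (tailFrame hm ψᵀ)ᵀ, ?_⟩
  rw [vecMul_vecMul, transpose_mul_tailFrame hm h, vecMul_sub, vecMul_one,
    single_eq_single_vecMulVec_single, vecMul_vecMulVec, dotProduct_single_one, hf, zero_smul,
    sub_zero]

theorem elemGroup_le_of_tailFrame (hm : 1 ≤ m) {φ ψ : Matrix (Fin n) (Fin n) R}
    (hφψ : φ * ψ = 1) (hψφ : ψ * φ = 1)
    {G : Subgroup (Matrix (Fin (n + 2 * m - 1)) (Fin (n + 2 * m - 1)) R)ˣ}
    (hrow : ∀ c, 1 + vecMulVec (Pi.single (blockEquiv hm (.inl 0)) 1) (c ᵥ* tailFrame hm φ) ∈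
      G.ofUnits)
    (hcol : ∀ c, 1 + vecMulVec (c ᵥ* tailFrame hm ψᵀ) (Pi.single (blockEquiv hm (.inl 0)) 1) ∈
      G.ofUnits) :
    elemGroup (n + 2 * m - 1) R ≤ G := by
  have hrow' : ∀ f : Fin (n + 2 * m - 1) → R, f (blockEquiv hm (.inl 0)) = 0 →
      1 + vecMulVec (Pi.single (blockEquiv hm (.inl 0)) 1) f ∈ G.ofUnits := by
    intro f hf
    obtain ⟨c, rfl⟩ := exists_vecMul_tailFrame_eq hm hψφ hf
    exact hrow c
  refine elemGroup_le_iff.mpr fun i j hij a ↦ one_add_single_mem_ofUnits hrow' (fun b hb ↦ ?_) hij a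
  obtain hsub | hnontriv := subsingleton_or_nontrivial (TailIndex m n)
  · have : Subsingleton (Fin n) := (Sum.inr_injective (α := Fin (m - 1) × Fin 2)).subsingleton
    have hψ : ψᵀ = ψ := by ext i j; rw [transpose_apply, Subsingleton.elim i j]
    obtain ⟨c, rfl⟩ := exists_vecMul_tailFrame_eq (φ := ψᵀ) hm (hψ ▸ hφψ) hb
    exact hcol c
  · refine one_add_vecMulVec_mem_ofUnits_of_dual_bases (tailFrame_mul_transpose hm hφψ)
      (transpose_mul_tailFrame hm hψφ) hrow' (fun k ↦ ?_) hb
    rw [col_transpose, ← single_one_vecMul]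
    exact hcol _

theorem theta_mem_elemGroup (σ : R → R) (hm : 1 ≤ m) (φ : Matrix (Fin n) (Fin n) R)
    (v : Fin (n + 2 * m - 1) → R) : theta σ m n φ v ∈ (elemGroup (n + 2 * m - 1) R).ofUnits := by
  rw [theta_eq_one_add_vecMulVec σ hm]
  exact one_add_vecMulVec_single_left_mem (fun j hj a ↦ elemGroup_le_iff.mp le_rfl _ j hj.symm a)
    (vecMul_tailFrame_head hm _ _)

theorem eta_mem_elemGroup (σ : R → R) (hm : 1 ≤ m) (ψ : Matrix (Fin n) (Fin n) R)
    (v : Fin (n + 2 * m - 1) → R) : eta σ m n ψ v ∈ (elemGroup (n + 2 * m - 1) R).ofUnits := by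
  rw [eta_eq_one_add_vecMulVec σ hm]
  exact one_add_vecMulVec_single_right_mem (fun i hi a ↦ elemGroup_le_iff.mp le_rfl i _ hi a)
    (vecMul_tailFrame_head hm _ _)

end Generation

theorem closure_theta_eta_eq_elemGroup_general {R : Type*} [Ring R] {σ : R → R}
    (hσ : Function.Surjective σ) (hσone : IsUnit (σ 1)) {m n : ℕ} (hm : 1 ≤ m)
    {φ ψ : Matrix (Fin n) (Fin n) R} (hψ : φ * ψ = 1 ∧ ψ * φ = 1) :
    (∀ v : Fin (n + 2 * m - 1) → R, IsUnit (theta σ m n φ v)) ∧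
    (∀ v : Fin (n + 2 * m - 1) → R, IsUnit (eta σ m n ψ v)) ∧
    Subgroup.closure { M : (Matrix (Fin (n + 2 * m - 1)) (Fin (n + 2 * m - 1)) R)ˣ |
        ∃ v : Fin (n + 2 * m - 1) → R,
          M.val = theta σ m n φ v ∨ M.val = eta σ m n ψ v } =
      elemGroup (n + 2 * m - 1) R := by
  have hθ v := Subgroup.isUnit_of_mem_ofUnits _ (theta_mem_elemGroup σ hm φ v)
  have hη v := Subgroup.isUnit_of_mem_ofUnits _ (eta_mem_elemGroup σ hm ψ v)
  refine ⟨hθ, hη, le_antisymm ?_ (elemGroup_le_of_tailFrame hm hψ.1 hψ.2 (fun c ↦ ?_) fun c ↦ ?_)⟩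
  · rw [Subgroup.closure_le]
    rintro M ⟨v, hM | hM⟩ <;> apply Subgroup.mem_of_mem_val_ofUnits <;> rw [hM]
    exacts [theta_mem_elemGroup σ hm φ v, eta_mem_elemGroup σ hm ψ v]
  · obtain ⟨v, rfl⟩ := coord_surjective hσ hσone hm isUnit_one c
    rw [← theta_eq_one_add_vecMulVec]
    exact Subgroup.mem_ofUnits _ (Subgroup.subset_closure ⟨v, .inl rfl⟩) (hθ v).unit_spec
  · obtain ⟨v, rfl⟩ := coord_surjective hσ hσone hm (hσone.ringInverse.pow 2) c
    rw [← eta_eq_one_add_vecMulVec]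
    exact Subgroup.mem_ofUnits _ (Subgroup.subset_closure ⟨v, .inr rfl⟩) (hη v).unit_spec

/-- Main theorem, odd unitary analogue of the Gram–Schmidt process:
the matrices `θ(v)` and `η(v)` are invertible, and the subgroup of `GL_N(R)` generated by
`{θ(v) : v ∈ R^N} ∪ {η(v) : v ∈ R^N}` coincides with the elementary linear group `E_N(R)`.
Here `N = n + 2m - 1` and `ψ` plays the role of `φ⁻¹`. -/
theorem closure_theta_eta_eq_elemGroup {R : Type*} [Ring R]
    (σ : R → R)
    (hσadd : ∀ r s : R, σ (r + s) = σ r + σ s)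
    (hσmul : ∀ r s : R, σ (r * s) = σ s * Ring.inverse (σ 1) * σ r)
    (hσinv : ∀ r : R, σ (σ r) = r)
    (hσone : IsUnit (σ 1))
    (m n : ℕ) (hm : 1 ≤ m) (hn : 1 ≤ n) (hN : 2 ≤ n + 2*m - 1)
    (φ ψ : Matrix (Fin n) (Fin n) R) (hψ : φ * ψ = 1 ∧ ψ * φ = 1) :
    (∀ v : Fin (n + 2*m - 1) → R, IsUnit (theta σ m n φ v)) ∧
    (∀ v : Fin (n + 2*m - 1) → R, IsUnit (eta σ m n ψ v)) ∧
    Subgroup.closure { M : (Matrix (Fin (n + 2*m - 1)) (Fin (n + 2*m - 1)) R)ˣ |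
        ∃ v : Fin (n + 2*m - 1) → R,
          M.val = theta σ m n φ v ∨ M.val = eta σ m n ψ v } =
      elemGroup (n + 2*m - 1) R := by
  exact closure_theta_eta_eq_elemGroup_general (fun r ↦ ⟨σ r, hσinv r⟩) hσone hm hψ
end

section
/- (Symplectic analogue, strengthening of Chattopadhyay–Rao.) Let R be a commutative ring with 1, n ≥ 2, and let φ be an invertible alternating 2n×2n matrix over R, written in block form φ = [[0, −c], [cᵗ, μ]] with c ∈ R^{2n−1} a row vector and μ a (2n−1)×(2n−1) matrix, and write φ⁻¹ = [[0, d], [−dᵗ, ρ]] with d ∈ R^{2n−1} a row vector and ρ a (2n−1)×(2n−1) matrix. For v ∈ R^{2n−1} (a row vector) define α(v) = I_{2n−1} + dᵗ·v·μ and β(v) = I_{2n−1} − ρ·vᵗ·c. Then α(v) and β(v) are invertible for all v, and the subgroup of GL_{2n−1}(R) generated by {α(v) : v ∈ R^{2n−1}} ∪ {β(v) : v ∈ R^{2n−1}} coincides with the elementary linear group E_{2n−1}(R). -/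
open Matrix

/-! Comparing the blocks of `φ * φ⁻¹ = 1` and `φ⁻¹ * φ = 1` shows that `c d = 1`, that `v μ` runs
through all rows `f` with `f d = 0`, and that `ρ v` runs through all columns `p` with `c p = 0`. So
the `α(v)` and `β(v)` are exactly the transvections `1 + d f` and `1 + p c` adapted to the
splittings of the column and row spaces given by `c d = 1`.

Suslin's argument shows that these transvections are elementary: a row `f` with `f d = 0` is a
combination of the Koszul relations `d_j e_i - d_i e_j` because `d` is unimodular, and for each of
these the transvection factors into elementary matrices. Conversely, commutators of the
transvections `1 + d f` and `1 + p c` produce `E_{ij}(c_i a)` and `E_{ij}(d_j a)`, hence, through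
`[E_{ik}(d_k a), E_{kj}(c_k)]`, every `E_{ij}(c_k d_k a)`, and `∑ c_k d_k = 1`. -/

section UnipotentDirections

variable (R : Type*) {A : Type*} [CommRing R] [Ring A] [Algebra R A]

/-- The elements `X` of an algebra whose whole one-parameter family `1 + a • X`, `a : R`, lies in
the submonoid `S`. Asking for every `a` at once makes this set stable under scalars, which supplies
the inverses `1 - X` of square-zero elements although `S` is only a submonoid. -/
def unipotentDirections (S : Submonoid A) : Set A := {X | ∀ a : R, 1 + a • X ∈ S}

variable {R} {S : Submonoid A} {X Y : A}

theorem zero_mem_unipotentDirections : (0 : A) ∈ unipotentDirections R S := fun a => by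
  simp

theorem smul_mem_unipotentDirections (r : R) (hX : X ∈ unipotentDirections R S) :
    r • X ∈ unipotentDirections R S := fun a => by
  simpa only [smul_smul] using hX (a * r)

theorem add_mem_unipotentDirections (hX : X ∈ unipotentDirections R S)
    (hY : Y ∈ unipotentDirections R S) (hXY : X * Y = 0) :
    X + Y ∈ unipotentDirections R S := fun a => by
  have factor : 1 + a • (X + Y) = (1 + a • X) * (1 + a • Y) := by
    simp only [mul_add, add_mul, one_mul, mul_one, smul_mul_smul_comm, hXY, smul_zero, smul_add]
    module
  exact factor ▸ S.mul_mem (hX a) (hY a)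

theorem sum_mem_unipotentDirections {κ : Type*} {s : Finset κ} {X : κ → A}
    (hX : ∀ k ∈ s, X k ∈ unipotentDirections R S)
    (hmul : (s : Set κ).Pairwise fun k l => X k * X l = 0) :
    ∑ k ∈ s, X k ∈ unipotentDirections R S := by
  classical
  induction s using Finset.induction_on with
  | empty => exact zero_mem_unipotentDirections
  | insert k s hk ih =>
    rw [Finset.coe_insert] at hmul
    rw [Finset.sum_insert hk]
    refine add_mem_unipotentDirections (hX k (Finset.mem_insert_self k s))
      (ih (fun l hl => hX l (Finset.mem_insert_of_mem hl)) (hmul.mono (Set.subset_insert _ _))) ?_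
    rw [Finset.mul_sum]
    exact Finset.sum_eq_zero fun l hl => hmul (Set.mem_insert _ _)
      (Set.mem_insert_of_mem _ hl) (by rintro rfl; exact hk hl)

theorem mul_mem_unipotentDirections (hX : X ∈ unipotentDirections R S)
    (hY : Y ∈ unipotentDirections R S) (hXX : X * X = 0) (hYY : Y * Y = 0) (hYX : Y * X = 0) :
    X * Y ∈ unipotentDirections R S := fun a => by
  have commutator : 1 + a • (X * Y) =
      (1 + a • X) * (1 + (1 : R) • Y) * ((1 + (-a) • X) * (1 + (-1 : R) • Y)) := by
    have hYX' (Z : A) : Y * (X * Z) = 0 := by rw [← mul_assoc, hYX, zero_mul]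
    have hXX' (Z : A) : X * (X * Z) = 0 := by rw [← mul_assoc, hXX, zero_mul]
    simp only [neg_smul, one_smul, mul_add, add_mul, one_mul, mul_one, mul_neg, neg_mul,
      smul_mul_assoc, mul_smul_comm, mul_assoc, hXX, hYY, hYX, hXX', hYX', mul_zero, smul_zero]
    module
  exact commutator ▸ S.mul_mem (S.mul_mem (hX a) (hY 1)) (S.mul_mem (hX (-a)) (hY (-1)))

end UnipotentDirections

section UnipotentGroup

variable {R A : Type*} [CommRing R] [Ring A] [Algebra R A]

/-- The group of units generated by the units of the form `1 + X` with `X ∈ 𝒳`. -/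
def unipotentGroup (𝒳 : Set A) : Subgroup Aˣ :=
  Subgroup.closure {u : Aˣ | ∃ X ∈ 𝒳, (u : A) = 1 + X}

theorem isUnit_one_add_of_mul_self_eq_zero {X : A} (hX : X * X = 0) : IsUnit (1 + X) :=
  IsNilpotent.isUnit_one_add ⟨2, by rw [pow_two, hX]⟩

theorem unipotentGroup_le_iff {𝒳 : Set A} (hsmul : ∀ a : R, ∀ X ∈ 𝒳, a • X ∈ 𝒳)
    (hsq : ∀ X ∈ 𝒳, X * X = 0) {G : Subgroup Aˣ} :
    unipotentGroup 𝒳 ≤ G ↔ 𝒳 ⊆ unipotentDirections R (G.toSubmonoid.map (Units.coeHom A)) := by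
  rw [unipotentGroup, Subgroup.closure_le]
  constructor
  · intro h X hX a
    obtain ⟨u, hu⟩ := isUnit_one_add_of_mul_self_eq_zero (hsq _ (hsmul a X hX))
    exact ⟨u, h ⟨a • X, hsmul a X hX, hu⟩, hu⟩
  · rintro h u ⟨X, hX, hu⟩
    have hmem := h hX 1
    rw [one_smul, ← hu] at hmem
    exact (Submonoid.mem_map_iff_mem Units.val_injective).mp hmem

end UnipotentGroup

section RankOne

variable {ι R : Type*} [Fintype ι] [CommRing R]

theorem vecMulVec_mul_vecMulVec_eq_zero {y z : ι → R} (h : y ⬝ᵥ z = 0) (x w : ι → R) :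
    vecMulVec x y * vecMulVec z w = 0 := by
  rw [vecMulVec_mul_vecMulVec, h, zero_smul, vecMulVec_zero]

variable [DecidableEq ι] {S : Submonoid (Matrix ι ι R)}

theorem vecMulVec_mem_unipotentDirections_of_commutator {x z w y : ι → R}
    (hxz : vecMulVec x z ∈ unipotentDirections R S)
    (hwy : vecMulVec w y ∈ unipotentDirections R S)
    (hzx : z ⬝ᵥ x = 0) (hyw : y ⬝ᵥ w = 0) (hyx : y ⬝ᵥ x = 0) :
    vecMulVec x ((z ⬝ᵥ w) • y) ∈ unipotentDirections R S := by
  rw [← vecMulVec_mul_vecMulVec]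
  exact mul_mem_unipotentDirections hxz hwy (vecMulVec_mul_vecMulVec_eq_zero hzx _ _)
    (vecMulVec_mul_vecMulVec_eq_zero hyw _ _) (vecMulVec_mul_vecMulVec_eq_zero hyx _ _)

/-- The image of a submonoid of square matrices under transposition. -/
def transposeSubmonoid (S : Submonoid (Matrix ι ι R)) : Submonoid (Matrix ι ι R) :=
  S.op.comap (transposeRingEquiv ι R)

theorem mem_unipotentDirections_transposeSubmonoid {X : Matrix ι ι R} :
    X ∈ unipotentDirections R (transposeSubmonoid S) ↔ Xᵀ ∈ unipotentDirections R S :=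
  forall_congr' fun a => by simp [transposeSubmonoid]

theorem vecMulVec_mem_unipotentDirections_transposeSubmonoid {x y : ι → R} :
    vecMulVec x y ∈ unipotentDirections R (transposeSubmonoid S) ↔
      vecMulVec y x ∈ unipotentDirections R S := by
  rw [mem_unipotentDirections_transposeSubmonoid, transpose_vecMulVec]

end RankOne

section Koszul

variable {ι R : Type*} [DecidableEq ι] [CommRing R]

/-- The Koszul relation `x j • eᵢ - x i • eⱼ`. -/
def koszulVec (x : ι → R) (i j : ι) : ι → R := Pi.single i (x j) - Pi.single j (x i)

theorem koszulVec_self (x : ι → R) (i : ι) : koszulVec x i i = 0 := sub_self _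

theorem koszulVec_apply_of_ne (x : ι → R) {i j k : ι} (hi : k ≠ i) (hj : k ≠ j) :
    koszulVec x i j k = 0 := by
  simp [koszulVec, hi, hj]

variable [Fintype ι]

theorem dotProduct_koszulVec (y x : ι → R) (i j : ι) :
    y ⬝ᵥ koszulVec x i j = y i * x j - y j * x i := by
  simp [koszulVec, dotProduct_sub]

theorem dotProduct_koszulVec_self (x : ι → R) (i j : ι) : x ⬝ᵥ koszulVec x i j = 0 := by
  rw [dotProduct_koszulVec, mul_comm, sub_self]

theorem eq_sum_smul_koszulVec {x y z : ι → R} (hyx : y ⬝ᵥ x = 0) (hzx : z ⬝ᵥ x = 1) :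
    y = ∑ p : ι × ι, (y p.1 * z p.2) • koszulVec x p.1 p.2 := by
  have hz (l : ι) : ∑ j, y l * z j * x j = y l := by
    simp only [mul_assoc, ← Finset.mul_sum]
    rw [← dotProduct, hzx, mul_one]
  have hy (l : ι) : ∑ i, y i * z l * x i = 0 := by
    simp only [mul_right_comm _ (z l), ← Finset.sum_mul]
    rw [← dotProduct, hyx, zero_mul]
  ext l
  simp only [Fintype.sum_prod_type, koszulVec, smul_sub, Finset.sum_sub_distrib, Pi.sub_apply,
    Finset.sum_apply, Pi.smul_apply, smul_eq_mul, Pi.single_apply, mul_ite, mul_zero]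
  rw [Finset.sum_comm]
  simp [hz, hy]

end Koszul

section Elementary

variable {ι R : Type*} [Fintype ι] [DecidableEq ι] [CommRing R] {S : Submonoid (Matrix ι ι R)}

/-- `S` contains all transvections `Matrix.transvection i j a` with `i ≠ j`. -/
def ContainsElementary (S : Submonoid (Matrix ι ι R)) : Prop :=
  ∀ i j, i ≠ j → Matrix.single i j 1 ∈ unipotentDirections R S

theorem ContainsElementary.transpose (hS : ContainsElementary S) :
    ContainsElementary (transposeSubmonoid S) := fun i j hij => by
  rw [mem_unipotentDirections_transposeSubmonoid, transpose_single]
  exact hS j i hij.symm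

theorem ContainsElementary.vecMulVec_mem_of_disjoint (hS : ContainsElementary S) {x y : ι → R}
    (hxy : ∀ k, x k = 0 ∨ y k = 0) : vecMulVec x y ∈ unipotentDirections R S := by
  rw [matrix_eq_sum_single (vecMulVec x y), ← Fintype.sum_prod_type']
  refine sum_mem_unipotentDirections (fun p _ => ?_) fun p _ q _ _ => ?_
  · rcases eq_or_ne p.1 p.2 with h | h
    · have hzero : vecMulVec x y p.1 p.2 = 0 := by
        rw [vecMulVec_apply, h]
        rcases hxy p.2 with h0 | h0 <;> rw [h0] <;> ring
      rw [hzero, single_zero]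
      exact zero_mem_unipotentDirections
    · simpa using smul_mem_unipotentDirections (vecMulVec x y p.1 p.2) (hS p.1 p.2 h)
  · rcases eq_or_ne p.2 q.1 with h | h
    · rw [h, single_mul_single_same, vecMulVec_apply, vecMulVec_apply]
      rcases hxy q.1 with h0 | h0 <;> simp [h0]
    · exact single_mul_single_of_ne (h := h) ..

theorem ContainsElementary.vecMulVec_mem_of_apply_eq_zero (hS : ContainsElementary S)
    {x y : ι → R} {k : ι} (hxk : x k = 0) (hyk : y k = 0) (hyx : y ⬝ᵥ x = 0) :
    vecMulVec x y ∈ unipotentDirections R S := by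
  have hx : vecMulVec x (Pi.single k 1) ∈ unipotentDirections R S :=
    hS.vecMulVec_mem_of_disjoint fun l => by
      rcases eq_or_ne l k with rfl | hl
      · exact Or.inl hxk
      · exact Or.inr (Pi.single_eq_of_ne hl _)
  have hy : vecMulVec (Pi.single k 1) y ∈ unipotentDirections R S :=
    hS.vecMulVec_mem_of_disjoint fun l => by
      rcases eq_or_ne l k with rfl | hl
      · exact Or.inr hyk
      · exact Or.inl (Pi.single_eq_of_ne hl _)
  simpa using vecMulVec_mem_unipotentDirections_of_commutator hx hy
    (by simp [hxk]) (by simp [hyk]) hyx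

theorem ContainsElementary.vecMulVec_koszulVec_mem (hS : ContainsElementary S)
    (hι : 3 ≤ ENat.card ι) (x : ι → R) (i j : ι) :
    vecMulVec x (koszulVec x i j) ∈ unipotentDirections R S := by
  rcases eq_or_ne i j with rfl | hij
  · rw [koszulVec_self, vecMulVec_zero]
    exact zero_mem_unipotentDirections
  obtain ⟨k, hki, hkj⟩ := ENat.exists_ne_ne_of_three_le hι i j
  set y := koszulVec x i j
  have hy {l : ι} (hli : l ≠ i) (hlj : l ≠ j) : y l = 0 := koszulVec_apply_of_ne x hli hlj
  let u : ι → R := Pi.single i (x i) + Pi.single j (x j)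
  have hyu : y ⬝ᵥ u = 0 := by
    rw [dotProduct_comm, dotProduct_koszulVec]
    simp [u, hij, hij.symm, mul_comm]
  have rest_mem : vecMulVec (x - u) y ∈ unipotentDirections R S := by
    refine hS.vecMulVec_mem_of_disjoint fun l => ?_
    by_cases hli : l = i
    · left; simp [u, hli, hij]
    by_cases hlj : l = j
    · left; simp [u, hlj, hij.symm]
    exact Or.inr (hy hli hlj)
  have support_mem : vecMulVec u y ∈ unipotentDirections R S :=
    hS.vecMulVec_mem_of_apply_eq_zero (by simp [u, hki, hkj]) (hy hki hkj) hyu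
  have hsum := add_mem_unipotentDirections rest_mem support_mem
    (vecMulVec_mul_vecMulVec_eq_zero hyu _ _)
  rwa [← add_vecMulVec, sub_add_cancel] at hsum

theorem ContainsElementary.vecMulVec_mem_of_unimodular_left (hS : ContainsElementary S)
    (hι : 3 ≤ ENat.card ι) {x y z : ι → R} (hyx : y ⬝ᵥ x = 0) (hzx : z ⬝ᵥ x = 1) :
    vecMulVec x y ∈ unipotentDirections R S := by
  have expand : vecMulVec x y =
      ∑ p : ι × ι, (y p.1 * z p.2) • vecMulVec x (koszulVec x p.1 p.2) := by
    conv_lhs => rw [eq_sum_smul_koszulVec hyx hzx]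
    ext i j
    simp [vecMulVec_apply, Matrix.sum_apply, Finset.mul_sum, mul_left_comm]
  rw [expand]
  refine sum_mem_unipotentDirections
    (fun p _ => smul_mem_unipotentDirections _ (hS.vecMulVec_koszulVec_mem hι x p.1 p.2))
    fun p _ q _ _ => ?_
  have hpx : koszulVec x p.1 p.2 ⬝ᵥ x = 0 := by rw [dotProduct_comm, dotProduct_koszulVec_self]
  simp only [smul_mul_smul_comm, vecMulVec_mul_vecMulVec_eq_zero hpx, smul_zero]

theorem ContainsElementary.vecMulVec_mem_of_unimodular_right (hS : ContainsElementary S)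
    (hι : 3 ≤ ENat.card ι) {x y z : ι → R} (hyx : y ⬝ᵥ x = 0) (hyz : y ⬝ᵥ z = 1) :
    vecMulVec x y ∈ unipotentDirections R S :=
  vecMulVec_mem_unipotentDirections_transposeSubmonoid.mp <|
    hS.transpose.vecMulVec_mem_of_unimodular_left hι (by rwa [dotProduct_comm])
      (by rwa [dotProduct_comm])

end Elementary

section Splitting

variable {ι R : Type*} [Fintype ι] [DecidableEq ι] [CommRing R]

/-- `S` contains the transvections adapted to the splittings `d R ⊕ ker c` of the column space and
`R c ⊕ d^⊥` of the row space. -/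
structure ContainsSplitting (S : Submonoid (Matrix ι ι R)) (c d : ι → R) : Prop where
  dotProduct_eq_one : c ⬝ᵥ d = 1
  vecMulVec_left_mem : ∀ f, f ⬝ᵥ d = 0 → vecMulVec d f ∈ unipotentDirections R S
  vecMulVec_right_mem : ∀ p, c ⬝ᵥ p = 0 → vecMulVec p c ∈ unipotentDirections R S

namespace ContainsSplitting

variable {S : Submonoid (Matrix ι ι R)} {c d : ι → R}

theorem transpose (h : ContainsSplitting S c d) : ContainsSplitting (transposeSubmonoid S) d c where
  dotProduct_eq_one := by rw [dotProduct_comm, h.dotProduct_eq_one]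
  vecMulVec_left_mem f hf := vecMulVec_mem_unipotentDirections_transposeSubmonoid.mpr <|
    h.vecMulVec_right_mem f (by rwa [dotProduct_comm])
  vecMulVec_right_mem p hp := vecMulVec_mem_unipotentDirections_transposeSubmonoid.mpr <|
    h.vecMulVec_left_mem p (by rwa [dotProduct_comm])

theorem vecMulVec_mem_of_dotProduct_left (h : ContainsSplitting S c d) {x y : ι → R}
    (hcx : c ⬝ᵥ x = 0) (hyx : y ⬝ᵥ x = 0) : vecMulVec x y ∈ unipotentDirections R S := by
  set f := y - (y ⬝ᵥ d) • c with hf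
  have hfd : f ⬝ᵥ d = 0 := by simp [hf, sub_dotProduct, h.dotProduct_eq_one]
  have hfx : f ⬝ᵥ x = 0 := by simp [hf, sub_dotProduct, hcx, hyx]
  have hxc := h.vecMulVec_right_mem x hcx
  have hxf : vecMulVec x f ∈ unipotentDirections R S := by
    simpa [h.dotProduct_eq_one] using vecMulVec_mem_unipotentDirections_of_commutator hxc
      (h.vecMulVec_left_mem f hfd) hcx hfd hfx
  have hsum := add_mem_unipotentDirections hxf (smul_mem_unipotentDirections (y ⬝ᵥ d) hxc)
    (by rw [mul_smul_comm, vecMulVec_mul_vecMulVec_eq_zero hfx, smul_zero])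
  rwa [← vecMulVec_smul, ← vecMulVec_add, sub_add_cancel] at hsum

theorem vecMulVec_mem_of_dotProduct_right (h : ContainsSplitting S c d) {x y : ι → R}
    (hyd : y ⬝ᵥ d = 0) (hyx : y ⬝ᵥ x = 0) : vecMulVec x y ∈ unipotentDirections R S :=
  vecMulVec_mem_unipotentDirections_transposeSubmonoid.mp <|
    h.transpose.vecMulVec_mem_of_dotProduct_left (by rwa [dotProduct_comm])
      (by rwa [dotProduct_comm])

theorem smul_single_mem_left (h : ContainsSplitting S c d) (hι : 3 ≤ ENat.card ι) {i j : ι}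
    (hij : i ≠ j) : c i • Matrix.single i j 1 ∈ unipotentDirections R S := by
  obtain ⟨k, hki, hkj⟩ := ENat.exists_ne_ne_of_three_le hι i j
  -- `x` is congruent to `eᵢ` modulo `ker c`, vanishes at `j`, and is orthogonal to `f`.
  let x : ι → R := c i • d + d j • koszulVec c i j
  let f : ι → R := Pi.single k 1 - d k • c
  have hcx : c ⬝ᵥ x = c i := by
    simp [x, dotProduct_add, dotProduct_koszulVec_self, h.dotProduct_eq_one]
  have hxj : x j = 0 := by simp [x, koszulVec, hij.symm, mul_comm]
  have hfx : f ⬝ᵥ x = 0 := by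
    rw [sub_dotProduct, smul_dotProduct, hcx]
    simp [x, koszulVec_apply_of_ne c hki hkj, mul_comm]
  have hfd : f ⬝ᵥ d = 0 := by simp [f, sub_dotProduct, h.dotProduct_eq_one]
  have hfp : f ⬝ᵥ koszulVec c k i = c i := by
    rw [sub_dotProduct, smul_dotProduct, dotProduct_koszulVec_self, dotProduct_koszulVec]
    simp [hki.symm]
  have hjp : Pi.single j 1 ⬝ᵥ koszulVec c k i = 0 := by
    simp [koszulVec_apply_of_ne c hkj.symm hij.symm]
  have hxj_mem : c i • vecMulVec x (Pi.single j 1) ∈ unipotentDirections R S := by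
    rw [← vecMulVec_smul, ← hfp]
    exact vecMulVec_mem_unipotentDirections_of_commutator
      (h.vecMulVec_mem_of_dotProduct_right hfd hfx)
      (h.vecMulVec_mem_of_dotProduct_left (dotProduct_koszulVec_self c k i) hjp)
      hfx hjp (by simp [hxj])
  have hjr : Pi.single j 1 ⬝ᵥ (Pi.single i 1 - x) = 0 := by simp [hxj, hij.symm]
  have hrest : vecMulVec (Pi.single i 1 - x) (Pi.single j 1) ∈ unipotentDirections R S :=
    h.vecMulVec_mem_of_dotProduct_left (by simp [dotProduct_sub, hcx]) hjr
  have hsum := add_mem_unipotentDirections hxj_mem (smul_mem_unipotentDirections (c i) hrest)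
    (by rw [smul_mul_smul_comm, vecMulVec_mul_vecMulVec_eq_zero hjr, smul_zero])
  rwa [← smul_add, ← add_vecMulVec, add_sub_cancel,
    ← single_eq_single_vecMulVec_single] at hsum

theorem smul_single_mem_right (h : ContainsSplitting S c d) (hι : 3 ≤ ENat.card ι) {i j : ι}
    (hij : i ≠ j) : d j • Matrix.single i j 1 ∈ unipotentDirections R S := by
  have hji := h.transpose.smul_single_mem_left hι hij.symm
  rwa [mem_unipotentDirections_transposeSubmonoid, transpose_smul, transpose_single] at hji

theorem containsElementary (h : ContainsSplitting S c d) (hι : 3 ≤ ENat.card ι) :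
    ContainsElementary S := by
  intro i j hij
  have expand : Matrix.single i j 1 = ∑ k, (c k * d k) • Matrix.single i j (1 : R) := by
    rw [← Finset.sum_smul, ← dotProduct, h.dotProduct_eq_one, one_smul]
  rw [expand]
  refine sum_mem_unipotentDirections (fun k _ => ?_) fun k _ l _ _ => ?_
  · rcases eq_or_ne k i with rfl | hki
    · rw [mul_comm, mul_smul]
      exact smul_mem_unipotentDirections _ (h.smul_single_mem_left hι hij)
    rcases eq_or_ne k j with rfl | hkj
    · rw [mul_smul]
      exact smul_mem_unipotentDirections _ (h.smul_single_mem_right hι hij)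
    have hmul := mul_mem_unipotentDirections (h.smul_single_mem_right hι hki.symm)
      (h.smul_single_mem_left hι hkj) (by simp [hki]) (by simp [hkj.symm]) (by simp [hij.symm])
    rwa [smul_mul_smul_comm, single_mul_single_same, one_mul, mul_comm (d k)] at hmul
  · simp [hij.symm]

end ContainsSplitting

end Splitting

section Groups

variable {ι R : Type*} [Fintype ι] [DecidableEq ι] [CommRing R]

variable (ι R) in
/-- The elementary linear group `E_ι(R)`, generated by the matrices
`Matrix.transvection i j a = 1 + Matrix.single i j a` with `i ≠ j`. -/
def elementaryGroup : Subgroup (Matrix ι ι R)ˣ :=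
  unipotentGroup {X | ∃ i j a, i ≠ j ∧ X = Matrix.single i j a}

theorem elementaryGroup_le_iff {G : Subgroup (Matrix ι ι R)ˣ} :
    elementaryGroup ι R ≤ G ↔ ContainsElementary (G.toSubmonoid.map (Units.coeHom _)) := by
  rw [elementaryGroup, unipotentGroup_le_iff (R := R)]
  · constructor
    · exact fun h i j hij => h ⟨i, j, 1, hij, rfl⟩
    · rintro h _ ⟨i, j, a, hij, rfl⟩
      simpa using smul_mem_unipotentDirections a (h i j hij)
  · rintro b _ ⟨i, j, a, hij, rfl⟩
    exact ⟨i, j, b * a, hij, by simp⟩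
  · rintro _ ⟨i, j, a, hij, rfl⟩
    exact single_mul_single_of_ne (h := hij.symm) ..

/-- The group generated by the transvections `1 + d f` with `f d = 0` and `1 + p c` with `c p = 0`,
for rows `c`, `f` and columns `d`, `p`. -/
def splittingGroup (c d : ι → R) : Subgroup (Matrix ι ι R)ˣ :=
  unipotentGroup ({X | ∃ f, f ⬝ᵥ d = 0 ∧ X = vecMulVec d f} ∪
    {X | ∃ p, c ⬝ᵥ p = 0 ∧ X = vecMulVec p c})

theorem splittingGroup_le_iff {c d : ι → R} (hcd : c ⬝ᵥ d = 1) {G : Subgroup (Matrix ι ι R)ˣ} :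
    splittingGroup c d ≤ G ↔ ContainsSplitting (G.toSubmonoid.map (Units.coeHom _)) c d := by
  rw [splittingGroup, unipotentGroup_le_iff (R := R)]
  · constructor
    · exact fun h => ⟨hcd, fun f hf => h (Or.inl ⟨f, hf, rfl⟩), fun p hp => h (Or.inr ⟨p, hp, rfl⟩)⟩
    · rintro h _ (⟨f, hf, rfl⟩ | ⟨p, hp, rfl⟩)
      exacts [h.vecMulVec_left_mem f hf, h.vecMulVec_right_mem p hp]
  · rintro a _ (⟨f, hf, rfl⟩ | ⟨p, hp, rfl⟩)
    · exact Or.inl ⟨a • f, by simp [hf], by rw [vecMulVec_smul]⟩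
    · exact Or.inr ⟨a • p, by simp [hp], by rw [smul_vecMulVec]⟩
  · rintro _ (⟨f, hf, rfl⟩ | ⟨p, hp, rfl⟩)
    exacts [vecMulVec_mul_vecMulVec_eq_zero hf _ _, vecMulVec_mul_vecMulVec_eq_zero hp _ _]

theorem splittingGroup_eq_elementaryGroup (hι : 3 ≤ ENat.card ι) {c d : ι → R}
    (hcd : c ⬝ᵥ d = 1) : splittingGroup c d = elementaryGroup ι R := by
  apply le_antisymm
  · have hE := elementaryGroup_le_iff.mp (le_refl (elementaryGroup ι R))
    exact (splittingGroup_le_iff hcd).mpr ⟨hcd,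
      fun f hf => hE.vecMulVec_mem_of_unimodular_left hι hf hcd,
      fun p hp => hE.vecMulVec_mem_of_unimodular_right hι hp hcd⟩
  · exact elementaryGroup_le_iff.mpr (((splittingGroup_le_iff hcd).mp le_rfl).containsElementary hι)

theorem elemGroup_eq_elementaryGroup (N : ℕ) : elemGroup N R = elementaryGroup (Fin N) R := by
  have emat (i j : Fin N) (a : R) : Emat R N (i + 1) (j + 1) a = 1 + Matrix.single i j a := by
    ext r s
    simp [Emat, Matrix.single_apply, Fin.val_inj, eq_comm]
  rw [elemGroup, elementaryGroup, unipotentGroup]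
  congr 1
  ext M
  constructor
  · rintro ⟨i, j, a, hi, hiN, hj, hjN, hij, hM⟩
    obtain ⟨i, rfl⟩ := Nat.exists_eq_add_of_le' hi
    obtain ⟨j, rfl⟩ := Nat.exists_eq_add_of_le' hj
    exact ⟨_, ⟨⟨i, hiN⟩, ⟨j, hjN⟩, a, by simpa using hij, rfl⟩, hM.trans (emat ⟨i, hiN⟩ ⟨j, hjN⟩ a)⟩
  · rintro ⟨_, ⟨i, j, a, hij, rfl⟩, hM⟩
    exact ⟨i + 1, j + 1, a, by omega, by omega, by omega, by omega, by omega,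
      hM.trans (emat i j a).symm⟩

end Groups

section Blocks

variable {ι R : Type*} [Fintype ι] [DecidableEq ι] [CommRing R]
  {b c d e : ι → R} {μ ρ : Matrix ι ι R}

theorem fromBlocks_zero_mul_eq_one
    (h : fromBlocks 0 (replicateRow (Fin 1) (-c)) (replicateCol (Fin 1) b) μ *
      fromBlocks 0 (replicateRow (Fin 1) e) (replicateCol (Fin 1) (-d)) ρ = 1) :
    c ⬝ᵥ d = 1 ∧ c ᵥ* ρ = 0 ∧ μ *ᵥ d = 0 ∧ vecMulVec d c + ρ * μ = 1 := by
  have h' := mul_eq_one_comm.mp h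
  rw [fromBlocks_multiply, ← fromBlocks_one, fromBlocks_inj] at h h'
  obtain ⟨hcd, hcρ, hμd, -⟩ := h
  obtain ⟨-, -, -, hone⟩ := h'
  have rankOne : replicateCol (Fin 1) (-d) * replicateRow (Fin 1) (-c) = vecMulVec d c := by
    ext i j
    simp [Matrix.mul_apply, vecMulVec_apply]
  refine ⟨?_, ?_, ?_, ?_⟩
  · simpa using congr_fun₂ hcd 0 0
  · simpa [← replicateRow_vecMul, neg_vecMul] using hcρ
  · simpa [← replicateCol_mulVec, mulVec_neg] using hμd
  · rwa [rankOne] at hone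

theorem exists_vecMul_eq_iff (hμd : μ *ᵥ d = 0) (hone : vecMulVec d c + ρ * μ = 1) {f : ι → R} :
    (∃ v, v ᵥ* μ = f) ↔ f ⬝ᵥ d = 0 := by
  constructor
  · rintro ⟨v, rfl⟩
    rw [← dotProduct_mulVec, hμd, dotProduct_zero]
  · intro hf
    refine ⟨f ᵥ* ρ, ?_⟩
    simpa [vecMul_add, vecMul_vecMulVec, hf] using congr_arg (f ᵥ* ·) hone

theorem exists_mulVec_eq_iff (hcρ : c ᵥ* ρ = 0) (hone : vecMulVec d c + ρ * μ = 1) {p : ι → R} :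
    (∃ v, ρ *ᵥ v = p) ↔ c ⬝ᵥ p = 0 := by
  constructor
  · rintro ⟨v, rfl⟩
    rw [dotProduct_mulVec, hcρ, zero_dotProduct]
  · intro hp
    refine ⟨μ *ᵥ p, ?_⟩
    simpa [add_mulVec, vecMulVec_mulVec, hp] using congr_arg (· *ᵥ p) hone

theorem closure_eq_splittingGroup (hcρ : c ᵥ* ρ = 0) (hμd : μ *ᵥ d = 0)
    (hone : vecMulVec d c + ρ * μ = 1) :
    Subgroup.closure {M : (Matrix ι ι R)ˣ | ∃ v : ι → R,
      M.val = 1 + vecMulVec d v * μ ∨ M.val = 1 - ρ * vecMulVec v c} = splittingGroup c d := by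
  rw [splittingGroup, unipotentGroup]
  congr 1
  ext M
  constructor
  · rintro ⟨v, hM | hM⟩
    · exact ⟨_, Or.inl ⟨v ᵥ* μ, (exists_vecMul_eq_iff hμd hone).mp ⟨v, rfl⟩, rfl⟩,
        by rw [hM, vecMulVec_mul]⟩
    · exact ⟨_, Or.inr ⟨ρ *ᵥ -v, (exists_mulVec_eq_iff hcρ hone).mp ⟨-v, rfl⟩, rfl⟩,
        by rw [hM, mul_vecMulVec, mulVec_neg, neg_vecMulVec, sub_eq_add_neg]⟩
  · rintro ⟨_, ⟨f, hf, rfl⟩ | ⟨p, hp, rfl⟩, hM⟩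
    · obtain ⟨v, rfl⟩ := (exists_vecMul_eq_iff hμd hone).mpr hf
      exact ⟨v, Or.inl (by rw [hM, vecMulVec_mul])⟩
    · obtain ⟨v, rfl⟩ := (exists_mulVec_eq_iff hcρ hone).mpr hp
      exact ⟨-v, Or.inr (by
        rw [hM, mul_vecMulVec, mulVec_neg, neg_vecMulVec, sub_neg_eq_add])⟩

theorem isUnit_one_add_vecMulVec_mul (hμd : μ *ᵥ d = 0) (v : ι → R) :
    IsUnit (1 + vecMulVec d v * μ) := by
  rw [vecMulVec_mul]
  refine isUnit_one_add_of_mul_self_eq_zero (vecMulVec_mul_vecMulVec_eq_zero ?_ _ _)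
  rw [← dotProduct_mulVec, hμd, dotProduct_zero]

theorem isUnit_one_sub_mul_vecMulVec (hcρ : c ᵥ* ρ = 0) (v : ι → R) :
    IsUnit (1 - ρ * vecMulVec v c) := by
  rw [mul_vecMulVec, sub_eq_add_neg, ← neg_vecMulVec]
  refine isUnit_one_add_of_mul_self_eq_zero (vecMulVec_mul_vecMulVec_eq_zero ?_ _ _)
  rw [dotProduct_neg, dotProduct_mulVec, hcρ, zero_dotProduct, neg_zero]

theorem closure_vaserstein_eq_elemGroup_symplectic_general (hι : 3 ≤ ENat.card ι)
    (hφψ : fromBlocks 0 (replicateRow (Fin 1) (-c)) (replicateCol (Fin 1) b) μ *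
      fromBlocks 0 (replicateRow (Fin 1) e) (replicateCol (Fin 1) (-d)) ρ = 1) :
    (∀ v : ι → R, IsUnit (1 + vecMulVec d v * μ)) ∧
    (∀ v : ι → R, IsUnit (1 - ρ * vecMulVec v c)) ∧
    Subgroup.closure {M : (Matrix ι ι R)ˣ | ∃ v : ι → R,
      M.val = 1 + vecMulVec d v * μ ∨ M.val = 1 - ρ * vecMulVec v c} = elementaryGroup ι R := by
  obtain ⟨hcd, hcρ, hμd, hone⟩ := fromBlocks_zero_mul_eq_one hφψ
  refine ⟨isUnit_one_add_vecMulVec_mul hμd, isUnit_one_sub_mul_vecMulVec hcρ, ?_⟩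
  rw [closure_eq_splittingGroup hcρ hμd hone, splittingGroup_eq_elementaryGroup hι hcd]

end Blocks

/-- symplectic analogue, strengthening of Chattopadhyay–Rao:
let `φ` be an invertible alternating `2n × 2n` matrix over a commutative ring `R`
(`n ≥ 2`), written in block form `φ = [[0, -c], [cᵗ, μ]]`, with inverse
`φ⁻¹ = ψ = [[0, d], [-dᵗ, ρ]]`.  For a row vector `v ∈ R^{2n-1}` set
`α(v) = I + dᵗ·v·μ` and `β(v) = I - ρ·vᵗ·c`.  Then every `α(v)` and `β(v)` is invertible,
and the subgroup of `GL_{2n-1}(R)` generated by all `α(v)` and `β(v)` coincides with the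
elementary linear group `E_{2n-1}(R)`. -/
theorem closure_vaserstein_eq_elemGroup_symplectic (R : Type*) [CommRing R]
    (n : ℕ) (hn : 2 ≤ n)
    (c d : Fin (2*n - 1) → R)
    (μ ρ : Matrix (Fin (2*n - 1)) (Fin (2*n - 1)) R)
    (φ ψ : Matrix (Fin 1 ⊕ Fin (2*n - 1)) (Fin 1 ⊕ Fin (2*n - 1)) R)
    (hφblock : φ = Matrix.fromBlocks 0 (Matrix.of fun _ j => -(c j)) (Matrix.of fun i _ => c i) μ)
    (hφalt : φ.transpose = -φ ∧ ∀ i, φ i i = 0)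
    (hψblock : ψ = Matrix.fromBlocks 0 (Matrix.of fun _ j => d j) (Matrix.of fun i _ => -(d i)) ρ)
    (hφinv : φ * ψ = 1 ∧ ψ * φ = 1) :
    (∀ v : Fin (2*n - 1) → R,
      IsUnit ((1 : Matrix (Fin (2*n - 1)) (Fin (2*n - 1)) R) +
        (Matrix.of fun i j => d i * v j) * μ)) ∧
    (∀ v : Fin (2*n - 1) → R,
      IsUnit ((1 : Matrix (Fin (2*n - 1)) (Fin (2*n - 1)) R) -
        ρ * (Matrix.of fun i j => v i * c j))) ∧
    Subgroup.closure { M : (Matrix (Fin (2*n - 1)) (Fin (2*n - 1)) R)ˣ |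
        ∃ v : Fin (2*n - 1) → R,
          M.val = (1 : Matrix (Fin (2*n - 1)) (Fin (2*n - 1)) R) +
            (Matrix.of fun i j => d i * v j) * μ ∨
          M.val = (1 : Matrix (Fin (2*n - 1)) (Fin (2*n - 1)) R) -
            ρ * (Matrix.of fun i j => v i * c j) } =
      elemGroup (2*n - 1) R := by
  have hι : 3 ≤ ENat.card (Fin (2 * n - 1)) := by
    rw [ENat.card_eq_coe_fintype_card, Fintype.card_fin]
    exact_mod_cast (by omega : 3 ≤ 2 * n - 1)
  subst hφblock hψblock
  rw [elemGroup_eq_elementaryGroup]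
  exact closure_vaserstein_eq_elemGroup_symplectic_general hι hφinv.1
end
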